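/- arXiv:1110.3621 — 2 statements merged into one kernel-verified Lean document; each statement's English description precedes it below -/
import Mathlib

section
/- Let d ≥ 3 and 1 ≤ m ≤ d−2 be integers, let ν ≥ 0 be real, let n ≥ 1 be an integer, let c > 0, t > 0, and let α = (α_1,…,α_m) ∈ ℝ^m be nonzero. For τ_1,…,τ_n > 0 with τ_1+⋯+τ_n < t set τ_{n+1} := t − (τ_1+⋯+τ_n), and for each k ∈ {1,…,n+1} let A_k denote the m-fold angular integral ∫₀^π ⋯ ∫₀^π exp( i c τ_k ( α_m sinθ_1 ⋯ sinθ_{m−1} cosθ_m + ⋯ + α_2 sinθ_1 cosθ_2 + α_1 cosθ_1 ) ) · ( Γ(ν+d/2) / ( π^{m/2} Γ(ν+(d−m)/2) ) ) · ∏_{i=1}^m (sinθ_i)^{2ν+d−1−i} dθ_1 ⋯ dθ_m. Then the iterated integral ∫₀^t dτ_1 ∫₀^{t−τ_1} dτ_2 ⋯ ∫₀^{t−(τ_1+⋯+τ_{n−1})} dτ_n of ( Γ((n+1)(2ν+d−1)) / Γ(2ν+d−1)^{n+1} ) · ( ∏_{k=1}^{n+1} τ_k^{2ν+d−2} / t^{(n+1)(2ν+d−1)−1}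 ) · ∏_{k=1}^{n+1} A_k equals 2^{(n+1)(2ν+d−1)/2 − 1/2} · Γ( (n+1)(2ν+d−1)/2 + 1/2 ) · J_{(n+1)(2ν+d−1)/2 − 1/2}(c t ‖α‖) / (c t ‖α‖)^{(n+1)(2ν+d−1)/2 − 1/2}, where ‖α‖ is the Euclidean norm of α. -/
/-!
Write `E_b(z) = ∑ₖ (-z/4)ᵏ / (k! Γ(k+b))`, so that `J_μ(x) = (x/2)^μ E_{μ+1}(x²)`.

*One step.* Gegenbauer's integral (`integral_cos_mul_besselClifford`) says that
`∫₀^π cos(a cos θ) sin^p θ E_{(p+1)/2}(b sin² θ) dθ = √π E_{p/2+1}(a² + b)`: expand both factors,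
evaluate the trigonometric Beta integrals and recombine with the binomial theorem. Integrating the
polar angles one after the other (`integral_angles`, starting from no angles at all) shows that
`A s = Γ(a+1/2) E_{a+1/2}(c² s² ‖α‖²)`, where `2a = 2ν + d - 1`.

*All steps.* With `L = c² ‖α‖²`, the functions
`g_a(s) = Γ(a+1/2)/Γ(2a) s^(2a-1) E_{a+1/2}(L s²)` (`besselKernel`) satisfy `g_a * g_b = g_{a+b}`
on the half-line (`integral_besselKernel_mul`). By the duplication formula,
`g_a(s) = ∑ₖ (-L)ᵏ ((a)ₖ/k!) s^(2a+2k-1)/Γ(2a+2k)`; the powers convolve by Euler's Beta integral and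
the coefficients by Chu–Vandermonde. The integrand of the theorem is a constant times
`∏ₖ g_a(σₖ)`, so its simplex integral is an `(n+1)`-fold convolution
(`integral_simplex_besselKernel`), equal to a constant times `g_{(n+1)a}(t)`.
-/

open MeasureTheory Finset

/-- Bessel function of the first kind of order `μ`. -/
noncomputable def besselJ (μ : ℝ) (x : ℝ) : ℝ :=
  ∑' k : ℕ, (-1 : ℝ) ^ k / (k.factorial * Real.Gamma (k + μ + 1)) * (x / 2) ^ (2 * (k : ℝ) + μ)

/-! ### The entire Bessel series -/

/-- The `k`-th term of the Bessel–Clifford type series `besselClifford b z`. -/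
noncomputable def besselCliffordTerm (b z : ℝ) (k : ℕ) : ℝ :=
  (-1) ^ k * (z / 4) ^ k / (k.factorial * Real.Gamma (k + b))

/-- The entire function `z ↦ ∑ₖ (-z/4)ᵏ / (k! Γ(k+b))`, so that
`J_μ(x) = (x/2)^μ * besselClifford (μ+1) (x²)`. -/
noncomputable def besselClifford (b z : ℝ) : ℝ := ∑' k : ℕ, besselCliffordTerm b z k

lemma Gamma_le_Gamma_nat_add {b : ℝ} (hb : 1 ≤ b) (k : ℕ) :
    Real.Gamma b ≤ Real.Gamma (k + b) := by
  induction k with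
  | zero => simp
  | succ k ih =>
    have h : ((k + 1 : ℕ) : ℝ) + b = (k + b) + 1 := by push_cast; ring
    have hk : (0 : ℝ) ≤ k := k.cast_nonneg
    rw [h, Real.Gamma_add_one (by positivity)]
    have := Real.Gamma_pos_of_pos (show (0 : ℝ) < k + b by positivity)
    nlinarith

lemma abs_besselCliffordTerm_le {b z R : ℝ} (hb : 1 ≤ b) (hz : |z| ≤ R) (k : ℕ) :
    |besselCliffordTerm b z k| ≤ (Real.Gamma b)⁻¹ * ((R / 4) ^ k / k.factorial) := by
  have hG := Real.Gamma_pos_of_pos (show 0 < b by linarith)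
  have hGk := Gamma_le_Gamma_nat_add hb k
  have h4 : |z| / 4 ≤ R / 4 := by linarith
  have hR : 0 ≤ R := (abs_nonneg z).trans hz
  rw [besselCliffordTerm, abs_div, abs_mul, abs_pow, abs_pow, abs_neg, abs_one, one_pow, one_mul,
    abs_div, abs_of_pos (show (0 : ℝ) < 4 by norm_num),
    abs_of_pos (mul_pos (by positivity) (hG.trans_le hGk))]
  calc (|z| / 4) ^ k / (k.factorial * Real.Gamma (k + b))
      ≤ (R / 4) ^ k / (k.factorial * Real.Gamma b) := by
        gcongr
    _ = _ := by field_simp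

lemma summable_besselClifford_bound (b R : ℝ) :
    Summable fun k : ℕ => (Real.Gamma b)⁻¹ * ((R / 4) ^ k / (k.factorial : ℝ)) :=
  (Real.summable_pow_div_factorial _).mul_left _

lemma hasSum_besselClifford {b : ℝ} (hb : 1 ≤ b) (z : ℝ) :
    HasSum (besselCliffordTerm b z) (besselClifford b z) :=
  ((summable_besselClifford_bound b |z|).of_norm_bounded
    (fun k => abs_besselCliffordTerm_le hb le_rfl k)).hasSum

lemma continuous_besselCliffordTerm (b : ℝ) (k : ℕ) :
    Continuous fun z => besselCliffordTerm b z k := by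
  unfold besselCliffordTerm
  fun_prop

lemma continuous_besselClifford {b : ℝ} (hb : 1 ≤ b) : Continuous (besselClifford b) := by
  rw [continuous_iff_continuousAt]
  intro z
  have h : ContinuousOn (besselClifford b) (Metric.closedBall 0 (|z| + 1)) :=
    continuousOn_tsum (fun k => (continuous_besselCliffordTerm b k).continuousOn)
      (summable_besselClifford_bound b (|z| + 1))
      (fun k x hx => abs_besselCliffordTerm_le hb (by simpa using hx) k)
  refine h.continuousAt (Metric.closedBall_mem_nhds_of_mem ?_)
  simp

lemma besselClifford_zero {b : ℝ} : besselClifford b 0 = (Real.Gamma b)⁻¹ := by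
  unfold besselClifford
  rw [tsum_eq_single 0]
  · simp [besselCliffordTerm]
  · intro k hk
    simp [besselCliffordTerm, hk]

lemma besselJ_eq {μ x : ℝ} (hx : 0 < x) :
    besselJ μ x = (x / 2) ^ μ * besselClifford (μ + 1) (x ^ 2) := by
  unfold besselJ besselClifford
  rw [← tsum_mul_left]
  refine tsum_congr fun k => ?_
  rw [besselCliffordTerm, Real.rpow_add (by positivity), show (2 * (k : ℝ)) = ((2 * k : ℕ) : ℝ) by
    push_cast; ring, Real.rpow_natCast, pow_mul, show (x / 2) ^ 2 = x ^ 2 / 4 by ring, add_assoc]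
  ring

/-! ### Cauchy products, Beta integrals and Chu–Vandermonde -/

/-- A sum over `ℕ × ℕ` regrouped along antidiagonals. -/
lemma hasSum_antidiagonal {F : ℕ × ℕ → ℝ} {S : ℝ} (h : HasSum F S) :
    HasSum (fun l => ∑ p ∈ antidiagonal l, F p) S := by
  have h1 := (HasAntidiagonal.sigmaAntidiagonalEquivProd (A := ℕ)).hasSum_iff.mpr h
  refine h1.sigma fun l => ?_
  have h2 := hasSum_fintype (fun c : antidiagonal l => F c.1)
  rw [Finset.sum_coe_sort (antidiagonal l) F] at h2
  exact h2

/-- Termwise integration of a Cauchy product of two uniformly dominated series. -/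
lemma hasSum_integral_cauchyProduct {u v : ℕ → ℝ → ℝ} {f g : ℝ → ℝ} {a b : ℝ} {M N : ℕ → ℝ}
    (hu : ∀ k, Continuous (u k)) (hv : ∀ k, Continuous (v k))
    (hM : Summable M) (hN : Summable N)
    (huM : ∀ k, ∀ x ∈ Set.uIoc a b, |u k x| ≤ M k) (hvN : ∀ k, ∀ x ∈ Set.uIoc a b, |v k x| ≤ N k)
    (hf : ∀ x ∈ Set.uIoc a b, HasSum (fun k => u k x) (f x))
    (hg : ∀ x ∈ Set.uIoc a b, HasSum (fun k => v k x) (g x)) :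
    HasSum (fun l => ∑ p ∈ antidiagonal l, ∫ x in a..b, u p.1 x * v p.2 x)
      (∫ x in a..b, f x * g x) := by
  rcases eq_or_ne a b with rfl | hab
  · simp
  obtain ⟨x₀, hx₀⟩ : (Set.uIoc a b).Nonempty := by
    rw [Set.uIoc, Set.nonempty_Ioc]; exact min_lt_max.mpr hab
  have hM0 : ∀ k, 0 ≤ M k := fun k => (abs_nonneg _).trans (huM k x₀ hx₀)
  have hN0 : ∀ k, 0 ≤ N k := fun k => (abs_nonneg _).trans (hvN k x₀ hx₀)
  have hMN : Summable fun p : ℕ × ℕ => M p.1 * N p.2 := hM.mul_of_nonneg hN hM0 hN0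
  have hle : ∀ p : ℕ × ℕ, ∀ x ∈ Set.uIoc a b, ‖u p.1 x * v p.2 x‖ ≤ M p.1 * N p.2 := by
    intro p x hx
    rw [norm_mul]
    exact mul_le_mul (huM _ x hx) (hvN _ x hx) (norm_nonneg _) (hM0 _)
  refine hasSum_antidiagonal (F := fun p => ∫ x in a..b, u p.1 x * v p.2 x) ?_
  refine intervalIntegral.hasSum_integral_of_dominated_convergence
    (fun p _ => M p.1 * N p.2) (fun p => ?_) (fun p => ?_) ?_ ?_ ?_
  · exact ((hu p.1).mul (hv p.2)).aestronglyMeasurable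
  · exact ae_of_all _ (hle p)
  · exact ae_of_all _ fun _ _ => hMN
  · exact intervalIntegrable_const
  · refine ae_of_all _ fun x hx => (hf x hx).mul (hg x hx) ?_
    exact hMN.of_norm_bounded fun p => hle p x hx

/-- Euler's Beta integral on `[0, t]`. -/
lemma integral_rpow_mul_sub_rpow {x y t : ℝ} (hx : 0 < x) (hy : 0 < y) (ht : 0 < t) :
    ∫ s in (0 : ℝ)..t, s ^ (x - 1) * (t - s) ^ (y - 1) =
      t ^ (x + y - 1) * (Real.Gamma x * Real.Gamma y / Real.Gamma (x + y)) := by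
  have h := Complex.betaIntegral_scaled (x : ℂ) (y : ℂ) ht
  rw [Complex.betaIntegral_eq_Gamma_mul_div _ _ (by simpa) (by simpa)] at h
  have h1 : ∫ s in (0 : ℝ)..t, (s : ℂ) ^ ((x : ℂ) - 1) * ((t : ℂ) - s) ^ ((y : ℂ) - 1) =
      ∫ s in (0 : ℝ)..t, ((s ^ (x - 1) * (t - s) ^ (y - 1) : ℝ) : ℂ) := by
    refine intervalIntegral.integral_congr fun s hs => ?_
    rw [Set.uIcc_of_le ht.le] at hs
    rw [Complex.ofReal_mul, Complex.ofReal_cpow hs.1, Complex.ofReal_cpow (by linarith [hs.2])]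
    push_cast
    rfl
  rw [h1, intervalIntegral.integral_ofReal] at h
  apply Complex.ofReal_injective
  rw [h]
  rw [Complex.ofReal_mul, Complex.ofReal_cpow ht.le]
  push_cast
  simp only [← Complex.Gamma_ofReal, Complex.ofReal_add]

/-- The coefficient `(a)ₖ / k!` of the binomial series, in terms of `Γ`. -/
lemma choose_neg_eq_Gamma {a : ℝ} (ha : 0 < a) (k : ℕ) :
    Ring.choose (-a) k =
      (-1) ^ k * Real.Gamma (k + a) / (Real.Gamma a * k.factorial) := by
  have hG := (Real.Gamma_pos_of_pos ha).ne'
  rw [Ring.choose_eq_smul, smul_eq_mul]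
  have h : (descPochhammer ℤ k).smeval (-a) = (-1) ^ k * Real.Gamma (k + a) / Real.Gamma a := by
    induction k with
    | zero => simp [hG]
    | succ k ih =>
      rw [descPochhammer_succ_right, Polynomial.smeval_mul, ih, Polynomial.smeval_sub,
        Polynomial.smeval_X, Polynomial.smeval_natCast,
        show ((k + 1 : ℕ) : ℝ) + a = (k + a) + 1 by push_cast; ring,
        Real.Gamma_add_one (by positivity)]
      simp only [pow_one, pow_zero, nsmul_eq_mul, mul_one]
      field_simp
      ring
  rw [h]
  field_simp

/-- Chu–Vandermonde for the binomial-series coefficients. -/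
lemma sum_antidiagonal_Gamma {a b : ℝ} (ha : 0 < a) (hb : 0 < b) (l : ℕ) :
    ∑ p ∈ antidiagonal l, Real.Gamma (p.1 + a) / (Real.Gamma a * p.1.factorial) *
        (Real.Gamma (p.2 + b) / (Real.Gamma b * p.2.factorial)) =
      Real.Gamma (l + (a + b)) / (Real.Gamma (a + b) * l.factorial) := by
  have h := Ring.add_choose_eq (r := -a) (s := -b) l (Commute.all _ _)
  rw [← neg_add, choose_neg_eq_Gamma (add_pos ha hb)] at h
  have h1 : ∀ p ∈ antidiagonal l, Ring.choose (-a) p.1 * Ring.choose (-b) p.2 =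
      (-1) ^ l * (Real.Gamma (p.1 + a) / (Real.Gamma a * p.1.factorial) *
        (Real.Gamma (p.2 + b) / (Real.Gamma b * p.2.factorial))) := by
    intro p hp
    rw [choose_neg_eq_Gamma ha, choose_neg_eq_Gamma hb, ← mem_antidiagonal.mp hp, pow_add]
    ring
  rw [Finset.sum_congr rfl h1, ← Finset.mul_sum, mul_div_assoc] at h
  exact (mul_left_cancel₀ (by simp) h).symm

/-! ### Gegenbauer's integral -/

lemma integral_sin_rpow {q : ℝ} (hq : 1 ≤ q) :
    ∫ θ in (0 : ℝ)..Real.pi, Real.sin θ ^ q =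
      √Real.pi * Real.Gamma ((q + 1) / 2) / Real.Gamma (q / 2 + 1) := by
  have hr : 0 ≤ (q - 1) / 2 := by linarith
  have hbeta := integral_rpow_mul_sub_rpow (x := (q + 1) / 2) (y := (q + 1) / 2) (t := 1)
    (by linarith) (by linarith) one_pos
  rw [show (q + 1) / 2 - 1 = (q - 1) / 2 by ring, Real.one_rpow, one_mul,
    show (q + 1) / 2 + (q + 1) / 2 = q + 1 by ring] at hbeta
  -- substitute `s = (1 - cos θ) / 2`
  have hsub := intervalIntegral.integral_comp_mul_deriv (a := 0) (b := Real.pi)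
    (f := fun θ => (1 - Real.cos θ) / 2) (f' := fun θ => Real.sin θ / 2)
    (g := fun s => s ^ ((q - 1) / 2) * (1 - s) ^ ((q - 1) / 2))
    (fun θ _ => by simpa using ((Real.hasDerivAt_cos θ).const_sub 1).div_const 2)
    (by fun_prop)
    ((Real.continuous_rpow_const hr).mul
      ((Real.continuous_rpow_const hr).comp (continuous_const.sub continuous_id)))
  simp only [Real.cos_zero, Real.cos_pi, sub_self, zero_div, Function.comp] at hsub
  rw [show (1 - -1 : ℝ) / 2 = 1 by norm_num, hbeta] at hsub
  have hpt : ∫ θ in (0 : ℝ)..Real.pi, Real.sin θ ^ q = ∫ θ in (0 : ℝ)..Real.pi, 2 ^ q *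
      (((1 - Real.cos θ) / 2) ^ ((q - 1) / 2) * (1 - (1 - Real.cos θ) / 2) ^ ((q - 1) / 2) *
        (Real.sin θ / 2)) := by
    refine intervalIntegral.integral_congr fun θ hθ => ?_
    rw [Set.uIcc_of_le Real.pi_pos.le] at hθ
    have hs : 0 ≤ Real.sin θ := Real.sin_nonneg_of_mem_Icc hθ
    have h1 := Real.cos_le_one θ
    have h2 := Real.neg_one_le_cos θ
    have h3 : (1 - Real.cos θ) / 2 * (1 - (1 - Real.cos θ) / 2) = (Real.sin θ / 2) ^ 2 := by
      have := Real.sin_sq θ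
      rw [div_pow, this]; ring
    rw [← Real.mul_rpow (by linarith) (by linarith), h3, ← Real.rpow_natCast,
      ← Real.rpow_mul (by positivity)]
    nth_rewrite 2 [← Real.rpow_one (Real.sin θ / 2)]
    rw [← Real.rpow_add_of_nonneg (by positivity) (by push_cast; linarith) zero_le_one,
      show ((2 : ℕ) : ℝ) * ((q - 1) / 2) + 1 = q by push_cast; ring,
      ← Real.mul_rpow (by norm_num) (by positivity)]
    congr 1; ring
  rw [hpt, intervalIntegral.integral_const_mul, hsub]
  have hd := Real.Gamma_mul_Gamma_add_half ((q + 1) / 2)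
  rw [show (q + 1) / 2 + 1 / 2 = q / 2 + 1 by ring, show 2 * ((q + 1) / 2) = q + 1 by ring,
    show 1 - (q + 1) = -q by ring, Real.rpow_neg (by norm_num)] at hd
  have hG1 := (Real.Gamma_pos_of_pos (show 0 < q + 1 by linarith)).ne'
  have hG2 := (Real.Gamma_pos_of_pos (show 0 < q / 2 + 1 by linarith)).ne'
  have h2 : (2 : ℝ) ^ q ≠ 0 := (Real.rpow_pos_of_pos two_pos q).ne'
  field_simp at hd ⊢
  linear_combination hd

lemma integral_cos_pow_mul_sin_rpow {q : ℝ} (hq : 1 ≤ q) (j : ℕ) :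
    ∫ θ in (0 : ℝ)..Real.pi, Real.cos θ ^ (2 * j) * Real.sin θ ^ q =
      Real.Gamma (j + 1 / 2) * Real.Gamma ((q + 1) / 2) / Real.Gamma (j + q / 2 + 1) := by
  induction j generalizing q with
  | zero =>
    simp only [mul_zero, pow_zero, one_mul, Nat.cast_zero, zero_add, Real.Gamma_one_half_eq]
    exact integral_sin_rpow hq
  | succ j ih =>
    have hc : ∀ q : ℝ, 1 ≤ q → IntervalIntegrable
        (fun θ => Real.cos θ ^ (2 * j) * Real.sin θ ^ q) volume 0 Real.pi := fun q hq =>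
      Continuous.intervalIntegrable ((Real.continuous_cos.pow _).mul
        ((Real.continuous_rpow_const (by linarith)).comp Real.continuous_sin)) _ _
    have hpt : ∫ θ in (0 : ℝ)..Real.pi, Real.cos θ ^ (2 * (j + 1)) * Real.sin θ ^ q =
        ∫ θ in (0 : ℝ)..Real.pi, (Real.cos θ ^ (2 * j) * Real.sin θ ^ q -
          Real.cos θ ^ (2 * j) * Real.sin θ ^ (q + 2)) := by
      refine intervalIntegral.integral_congr fun θ hθ => ?_
      rw [Set.uIcc_of_le Real.pi_pos.le] at hθ
      have hs : 0 ≤ Real.sin θ := Real.sin_nonneg_of_mem_Icc hθ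
      rw [Real.rpow_add_of_nonneg hs (by linarith) zero_le_two, Real.rpow_two, Real.sin_sq]
      ring
    rw [hpt, intervalIntegral.integral_sub (hc q hq) (hc (q + 2) (by linarith)), ih hq,
      ih (by linarith), show (q + 2 + 1) / 2 = (q + 1) / 2 + 1 by ring,
      Real.Gamma_add_one (by linarith : (q + 1) / 2 ≠ 0),
      show (j : ℝ) + (q + 2) / 2 + 1 = (j + q / 2 + 1) + 1 by ring,
      show ((j + 1 : ℕ) : ℝ) + q / 2 + 1 = (j + q / 2 + 1) + 1 by push_cast; ring,
      Real.Gamma_add_one (by positivity : (j : ℝ) + q / 2 + 1 ≠ 0),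
      show ((j + 1 : ℕ) : ℝ) + 1 / 2 = (j + 1 / 2) + 1 by push_cast; ring,
      Real.Gamma_add_one (by positivity : (j : ℝ) + 1 / 2 ≠ 0)]
    have hj : (0 : ℝ) ≤ j := j.cast_nonneg
    have hG := (Real.Gamma_pos_of_pos (show 0 < (j : ℝ) + q / 2 + 1 by linarith)).ne'
    have h0 : (j : ℝ) + q / 2 + 1 ≠ 0 := by linarith
    field_simp
    ring

lemma Gamma_nat_add_half_div (j : ℕ) :
    Real.Gamma (j + 1 / 2) / ((2 * j).factorial : ℝ) = √Real.pi / (4 ^ j * j.factorial) := by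
  have h := Real.Gamma_mul_Gamma_add_half ((j : ℝ) + 1 / 2)
  rw [show (j : ℝ) + 1 / 2 + 1 / 2 = j + 1 by ring, Real.Gamma_nat_eq_factorial,
    show 2 * ((j : ℝ) + 1 / 2) = ((2 * j : ℕ) : ℝ) + 1 by push_cast; ring,
    Real.Gamma_nat_eq_factorial,
    show (1 : ℝ) - (((2 * j : ℕ) : ℝ) + 1) = -((2 * j : ℕ) : ℝ) by ring,
    Real.rpow_neg two_pos.le, Real.rpow_natCast, pow_mul, show (2 : ℝ) ^ 2 = 4 by norm_num] at h
  have := j.factorial_pos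
  have := (2 * j).factorial_pos
  field_simp at h ⊢
  linarith

/-- The binomial theorem divided by `l!`. -/
lemma sum_antidiagonal_pow_div_factorial (x y : ℝ) (l : ℕ) :
    ∑ p ∈ antidiagonal l, x ^ p.1 / p.1.factorial * (y ^ p.2 / p.2.factorial) =
      (x + y) ^ l / l.factorial := by
  rw [(Commute.all x y).add_pow', Finset.sum_div]
  refine Finset.sum_congr rfl fun p hp => ?_
  have h := Nat.add_choose_mul_factorial_mul_factorial p.1 p.2
  rw [← Nat.choose_symm_add, mem_antidiagonal.mp hp] at h
  have h' : ((l.choose p.1 : ℕ) : ℝ) * p.1.factorial * p.2.factorial = l.factorial := by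
    exact_mod_cast h
  have := p.1.factorial_pos
  have := p.2.factorial_pos
  have := l.factorial_pos
  rw [nsmul_eq_mul]
  field_simp
  linear_combination (-x ^ p.1 * y ^ p.2) * h'

/-- Gegenbauer's integral, integrating out one polar angle: it raises the order of the Bessel
function by one half and adds a coordinate to the squared norm. -/
lemma integral_cos_mul_besselClifford {p : ℝ} (hp : 1 ≤ p) (a b : ℝ) :
    ∫ θ in (0 : ℝ)..Real.pi, Real.cos (a * Real.cos θ) *
        (Real.sin θ ^ p * besselClifford ((p + 1) / 2) (b * Real.sin θ ^ 2)) =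
      √Real.pi * besselClifford (p / 2 + 1) (a ^ 2 + b) := by
  have hb1 : 1 ≤ (p + 1) / 2 := by linarith
  have hsinc : Continuous fun θ => Real.sin θ ^ p :=
    (Real.continuous_rpow_const (by linarith)).comp Real.continuous_sin
  have key := hasSum_integral_cauchyProduct (a := 0) (b := Real.pi)
    (u := fun j θ => (-1) ^ j * (a * Real.cos θ) ^ (2 * j) / ((2 * j).factorial : ℝ))
    (v := fun k θ => Real.sin θ ^ p * besselCliffordTerm ((p + 1) / 2) (b * Real.sin θ ^ 2) k)
    (f := fun θ => Real.cos (a * Real.cos θ))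
    (g := fun θ => Real.sin θ ^ p * besselClifford ((p + 1) / 2) (b * Real.sin θ ^ 2))
    (M := fun j => |a| ^ (2 * j) / ((2 * j).factorial : ℝ))
    (N := fun k => (Real.Gamma ((p + 1) / 2))⁻¹ * ((|b| / 4) ^ k / (k.factorial : ℝ)))
    (fun j => by fun_prop)
    (fun k => hsinc.mul ((continuous_besselCliffordTerm _ k).comp (by fun_prop)))
    (Real.hasSum_cosh |a|).summable (summable_besselClifford_bound _ _)
    (fun j θ _ => by
      rw [abs_div, abs_mul, abs_pow, abs_neg, abs_one, one_pow, one_mul, abs_pow, abs_mul,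
        Nat.abs_cast]
      have := Real.abs_cos_le_one θ
      gcongr
      exact mul_le_of_le_one_right (abs_nonneg a) this)
    (fun k θ hθ => by
      rw [Set.uIoc_of_le Real.pi_pos.le] at hθ
      have hs : 0 ≤ Real.sin θ := Real.sin_nonneg_of_mem_Icc ⟨hθ.1.le, hθ.2⟩
      have h1 : |Real.sin θ ^ p| ≤ 1 := by
        rw [abs_of_nonneg (Real.rpow_nonneg hs p)]
        exact Real.rpow_le_one hs (Real.sin_le_one θ) (by linarith)
      rw [abs_mul]
      refine (mul_le_of_le_one_left (abs_nonneg _) h1).trans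
        (abs_besselCliffordTerm_le hb1 ?_ k)
      rw [abs_mul, abs_pow]
      exact mul_le_of_le_one_right (abs_nonneg b)
        (pow_le_one₀ (abs_nonneg _) (Real.abs_sin_le_one θ)))
    (fun θ _ => Real.hasSum_cos _)
    (fun θ _ => (hasSum_besselClifford hb1 _).mul_left _)
  refine key.unique ?_
  convert! (hasSum_besselClifford (show 1 ≤ p / 2 + 1 by linarith) (a ^ 2 + b)).mul_left
    (√Real.pi) using 2 with l
  have hterm : ∀ q ∈ antidiagonal l, (∫ θ in (0 : ℝ)..Real.pi,
      (-1) ^ q.1 * (a * Real.cos θ) ^ (2 * q.1) / ((2 * q.1).factorial : ℝ) *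
      (Real.sin θ ^ p * besselCliffordTerm ((p + 1) / 2) (b * Real.sin θ ^ 2) q.2)) =
      √Real.pi * (-1) ^ l / Real.Gamma (l + (p / 2 + 1)) *
        ((a ^ 2 / 4) ^ q.1 / q.1.factorial * ((b / 4) ^ q.2 / q.2.factorial)) := by
    rintro ⟨j, k⟩ hq
    have hl : j + k = l := mem_antidiagonal.mp hq
    have hk : (0 : ℝ) ≤ k := k.cast_nonneg
    have hint := integral_cos_pow_mul_sin_rpow (q := p + (2 * k : ℕ))
      (by push_cast; linarith) j
    simp only
    calc _ = ∫ θ in (0 : ℝ)..Real.pi, ((-1) ^ j * a ^ (2 * j) / ((2 * j).factorial : ℝ) *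
          ((-1) ^ k * (b / 4) ^ k / (k.factorial * Real.Gamma (k + (p + 1) / 2)))) *
          (Real.cos θ ^ (2 * j) * Real.sin θ ^ (p + (2 * k : ℕ))) := by
          refine intervalIntegral.integral_congr fun θ hθ => ?_
          rw [Set.uIcc_of_le Real.pi_pos.le] at hθ
          have hs : 0 ≤ Real.sin θ := Real.sin_nonneg_of_mem_Icc hθ
          simp only [besselCliffordTerm]
          rw [Real.rpow_add_of_nonneg hs (by linarith) (Nat.cast_nonneg _), Real.rpow_natCast,
            pow_mul _ 2 k]
          ring
      _ = _ := by
          have hG := (Real.Gamma_pos_of_pos (show 0 < (k : ℝ) + (p + 1) / 2 by linarith)).ne'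
          rw [intervalIntegral.integral_const_mul, hint,
            show (p + ((2 * k : ℕ) : ℝ) + 1) / 2 = k + (p + 1) / 2 by push_cast; ring,
            show (j : ℝ) + (p + ((2 * k : ℕ) : ℝ)) / 2 + 1 = l + (p / 2 + 1) by
              rw [← hl]; push_cast; ring]
          calc _ = (-1) ^ (j + k) * (a ^ 2) ^ j * (b / 4) ^ k / k.factorial /
                Real.Gamma (l + (p / 2 + 1)) *
                (Real.Gamma (j + 1 / 2) / ((2 * j).factorial : ℝ)) *
                (Real.Gamma (k + (p + 1) / 2) / Real.Gamma (k + (p + 1) / 2)) := by ring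
            _ = _ := by
              rw [Gamma_nat_add_half_div, div_self hG, hl, div_pow (a ^ 2)]
              field_simp
  rw [Finset.sum_congr rfl hterm, ← Finset.mul_sum, sum_antidiagonal_pow_div_factorial,
    besselCliffordTerm]
  ring

/-! ### The convolution semigroup -/

/-- The unnormalised Dirichlet weight times a Bessel factor,
`s^(2a-1) Γ(a+1/2)/Γ(2a) * besselClifford (a+1/2) (L s²)`. In `a`, these functions form a
convolution semigroup. -/
noncomputable def besselKernel (L a s : ℝ) : ℝ :=
  Real.Gamma (a + 1 / 2) / Real.Gamma (2 * a) *
    (s ^ (2 * a - 1) * besselClifford (a + 1 / 2) (L * s ^ 2))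

lemma continuous_besselKernel {a : ℝ} (L : ℝ) (ha : 1 / 2 ≤ a) : Continuous (besselKernel L a) :=
  continuous_const.mul ((Real.continuous_rpow_const (by linarith)).mul
    ((continuous_besselClifford (by linarith)).comp (by fun_prop)))

/-- By the duplication formula, the series of `besselKernel` has the coefficients
`(-L)ᵏ (a)ₖ / k!` of the binomial series of `(1 + L x)^(-a)` against the functions
`s^(2a+2k-1) / Γ(2a+2k)`, which are themselves closed under convolution. -/
lemma besselKernel_term {L a s : ℝ} (ha : 1 / 2 ≤ a) (hs : 0 ≤ s) (k : ℕ) :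
    Real.Gamma (a + 1 / 2) / Real.Gamma (2 * a) *
        (s ^ (2 * a - 1) * besselCliffordTerm (a + 1 / 2) (L * s ^ 2) k) =
      (-L) ^ k * (Real.Gamma (k + a) / (Real.Gamma a * k.factorial)) *
        (s ^ (2 * a + (2 * k : ℕ) - 1) / Real.Gamma (2 * a + (2 * k : ℕ))) := by
  have hk : (0 : ℝ) ≤ k := k.cast_nonneg
  have h1 := Real.Gamma_mul_Gamma_add_half a
  have h2 := Real.Gamma_mul_Gamma_add_half (k + a)
  rw [show 2 * ((k : ℝ) + a) = 2 * a + (2 * k : ℕ) by push_cast; ring,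
    show (1 : ℝ) - (2 * a + (2 * k : ℕ)) = 1 - 2 * a - (2 * k : ℕ) by ring,
    Real.rpow_sub two_pos, Real.rpow_natCast, pow_mul, show (2 : ℝ) ^ 2 = 4 by norm_num,
    show (k : ℝ) + a + 1 / 2 = k + (a + 1 / 2) by ring] at h2
  rw [show 2 * a + ((2 * k : ℕ) : ℝ) - 1 = (2 * a - 1) + (2 * k : ℕ) by ring,
    Real.rpow_add_of_nonneg hs (by linarith) (Nat.cast_nonneg _), Real.rpow_natCast,
    pow_mul _ 2 k, besselCliffordTerm, neg_pow, mul_div_assoc L, mul_pow, div_pow]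
  have g1 := (Real.Gamma_pos_of_pos (show 0 < a by linarith)).ne'
  have g2 := (Real.Gamma_pos_of_pos (show 0 < 2 * a by linarith)).ne'
  have g3 := (Real.Gamma_pos_of_pos (show 0 < 2 * a + ((2 * k : ℕ) : ℝ) by positivity)).ne'
  have g4 := (Real.Gamma_pos_of_pos (show 0 < k + (a + 1 / 2) by positivity)).ne'
  have g5 := k.factorial_pos
  have h3 : Real.Gamma (a + 1 / 2) * Real.Gamma a * Real.Gamma (2 * a + (2 * k : ℕ)) =
      Real.Gamma (2 * a) * 4 ^ k * (Real.Gamma (k + a) * Real.Gamma (k + (a + 1 / 2))) := by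
    rw [h2, mul_comm (Real.Gamma (a + 1 / 2)), h1]
    field_simp
  clear h1 h2
  generalize Real.Gamma (2 * a + (2 * k : ℕ)) = G3 at *
  generalize Real.Gamma (k + (a + 1 / 2)) = G4 at *
  generalize Real.Gamma (a + 1 / 2) = G5 at *
  generalize Real.Gamma (2 * a) = G2 at *
  field_simp
  linear_combination (s ^ (2 * a - 1) * L ^ k * (s ^ 2) ^ k * (-1) ^ k) * h3

/-- The convolution semigroup property. -/
lemma integral_besselKernel_mul {L a b t : ℝ} (ha : 1 / 2 ≤ a) (hb : 1 / 2 ≤ b) (ht : 0 < t) :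
    ∫ s in (0 : ℝ)..t, besselKernel L a s * besselKernel L b (t - s) =
      besselKernel L (a + b) t := by
  have hbound : ∀ a : ℝ, 1 / 2 ≤ a → ∀ k : ℕ, ∀ s : ℝ, 0 ≤ s → s ≤ t →
      |Real.Gamma (a + 1 / 2) / Real.Gamma (2 * a) *
        (s ^ (2 * a - 1) * besselCliffordTerm (a + 1 / 2) (L * s ^ 2) k)| ≤
      |Real.Gamma (a + 1 / 2) / Real.Gamma (2 * a)| * (t ^ (2 * a - 1) *
        ((Real.Gamma (a + 1 / 2))⁻¹ * ((|L| * t ^ 2 / 4) ^ k / (k.factorial : ℝ)))) := by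
    intro a ha k s hs hst
    rw [abs_mul, abs_mul, abs_of_nonneg (Real.rpow_nonneg hs _)]
    have h1 := Real.rpow_le_rpow hs hst (show 0 ≤ 2 * a - 1 by linarith)
    have h2 : |L * s ^ 2| ≤ |L| * t ^ 2 := by
      rw [abs_mul, abs_of_nonneg (sq_nonneg s)]
      gcongr
    have h3 := abs_besselCliffordTerm_le (show 1 ≤ a + 1 / 2 by linarith) h2 k
    gcongr
  have hcont : ∀ a : ℝ, 1 / 2 ≤ a → ∀ k : ℕ, Continuous fun s : ℝ =>
      Real.Gamma (a + 1 / 2) / Real.Gamma (2 * a) *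
        (s ^ (2 * a - 1) * besselCliffordTerm (a + 1 / 2) (L * s ^ 2) k) := fun a ha k =>
    continuous_const.mul ((Real.continuous_rpow_const (by linarith)).mul
      ((continuous_besselCliffordTerm _ k).comp (by fun_prop)))
  have hsum : ∀ a : ℝ, 1 / 2 ≤ a → ∀ s : ℝ, HasSum (fun k : ℕ =>
      Real.Gamma (a + 1 / 2) / Real.Gamma (2 * a) *
        (s ^ (2 * a - 1) * besselCliffordTerm (a + 1 / 2) (L * s ^ 2) k)) (besselKernel L a s) :=
    fun a ha s => ((hasSum_besselClifford (by linarith) _).mul_left _).mul_left _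
  have hN : ∀ a : ℝ, Summable fun k : ℕ =>
      |Real.Gamma (a + 1 / 2) / Real.Gamma (2 * a)| * (t ^ (2 * a - 1) *
        ((Real.Gamma (a + 1 / 2))⁻¹ * ((|L| * t ^ 2 / 4) ^ k / (k.factorial : ℝ)))) := fun a =>
    ((summable_besselClifford_bound _ _).mul_left _).mul_left _
  have key := hasSum_integral_cauchyProduct (a := 0) (b := t)
    (u := fun j s => Real.Gamma (a + 1 / 2) / Real.Gamma (2 * a) *
        (s ^ (2 * a - 1) * besselCliffordTerm (a + 1 / 2) (L * s ^ 2) j))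
    (v := fun k s => Real.Gamma (b + 1 / 2) / Real.Gamma (2 * b) *
        ((t - s) ^ (2 * b - 1) * besselCliffordTerm (b + 1 / 2) (L * (t - s) ^ 2) k))
    (f := besselKernel L a) (g := fun s => besselKernel L b (t - s))
    (hcont a ha) (fun k => (hcont b hb k).comp (continuous_const.sub continuous_id))
    (hN a) (hN b)
    (fun k s hs => by
      rw [Set.uIoc_of_le ht.le] at hs
      exact hbound a ha k s hs.1.le hs.2)
    (fun k s hs => by
      rw [Set.uIoc_of_le ht.le] at hs
      exact hbound b hb k (t - s) (by linarith [hs.2]) (by linarith [hs.1]))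
    (fun s _ => hsum a ha s) (fun s _ => hsum b hb (t - s))
  refine key.unique ?_
  convert! hsum (a + b) (by linarith) t using 2 with l
  rw [besselKernel_term (by linarith) ht.le, ← sum_antidiagonal_Gamma (by linarith) (by linarith),
    Finset.mul_sum, Finset.sum_mul]
  refine Finset.sum_congr rfl ?_
  rintro ⟨j, k⟩ hq
  have hl : j + k = l := mem_antidiagonal.mp hq
  simp only
  have hja : 0 < 2 * a + ((2 * j : ℕ) : ℝ) := by positivity
  have hkb : 0 < 2 * b + ((2 * k : ℕ) : ℝ) := by positivity
  have hbeta := integral_rpow_mul_sub_rpow hja hkb ht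
  calc _ = ∫ s in (0 : ℝ)..t,
        ((-L) ^ j * (Real.Gamma (j + a) / (Real.Gamma a * j.factorial)) /
          Real.Gamma (2 * a + (2 * j : ℕ)) *
        ((-L) ^ k * (Real.Gamma (k + b) / (Real.Gamma b * k.factorial)) /
          Real.Gamma (2 * b + (2 * k : ℕ)))) *
        (s ^ (2 * a + (2 * j : ℕ) - 1) * (t - s) ^ (2 * b + (2 * k : ℕ) - 1)) := by
        refine intervalIntegral.integral_congr fun s hs => ?_
        rw [Set.uIcc_of_le ht.le] at hs
        rw [besselKernel_term ha hs.1, besselKernel_term hb (by linarith [hs.2])]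
        ring
    _ = _ := by
        have g1 := (Real.Gamma_pos_of_pos hja).ne'
        have g2 := (Real.Gamma_pos_of_pos hkb).ne'
        rw [intervalIntegral.integral_const_mul, hbeta,
          show 2 * a + ((2 * j : ℕ) : ℝ) + (2 * b + ((2 * k : ℕ) : ℝ)) =
            2 * (a + b) + ((2 * l : ℕ) : ℝ) by rw [← hl]; push_cast; ring, ← hl, pow_add]
        generalize Real.Gamma (2 * a + (2 * j : ℕ)) = G1 at *
        generalize Real.Gamma (2 * b + (2 * k : ℕ)) = G2 at *
        field_simp

/-! ### Fubini on `Fin n → ℝ` and the angular integral -/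

lemma volume_fin_zero_real_univ : (volume : Measure (Fin 0 → ℝ)).real Set.univ = 1 := by
  rw [Measure.real, volume_pi, Measure.pi_univ]
  simp

/-- Fubini, peeling off the first coordinate of a region in `Fin (n + 1) → ℝ`. -/
lemma setIntegral_fin_succ {E : Type*} [NormedAddCommGroup E] [NormedSpace ℝ E] {n : ℕ}
    {S : Set (Fin (n + 1) → ℝ)} {U : Set ℝ} {T : ℝ → Set (Fin n → ℝ)}
    {F : (Fin (n + 1) → ℝ) → E}
    (hS : MeasurableSet S) (hU : MeasurableSet U) (hT : ∀ x, MeasurableSet (T x))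
    (hST : ∀ x η, (Fin.cons x η : Fin (n + 1) → ℝ) ∈ S ↔ x ∈ U ∧ η ∈ T x)
    (hF : IntegrableOn F S) :
    ∫ θ in S, F θ = ∫ x in U, ∫ η in T x, F (Fin.cons x η) := by
  have hmp := (volume_preserving_piFinSuccAbove (fun _ : Fin (n + 1) => ℝ) 0).symm
  have he : ∀ y : ℝ × (Fin n → ℝ),
      (MeasurableEquiv.piFinSuccAbove (fun _ : Fin (n + 1) => ℝ) 0).symm y =
        (Fin.cons y.1 y.2 : Fin (n + 1) → ℝ) := by
    intro y
    simp only [MeasurableEquiv.piFinSuccAbove, Fin.insertNthEquiv_zero]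
    rfl
  rw [← integral_indicator hS, ← hmp.integral_comp' (S.indicator F)]
  have hI : Integrable (fun y : ℝ × (Fin n → ℝ) => S.indicator F
      ((MeasurableEquiv.piFinSuccAbove (fun _ : Fin (n + 1) => ℝ) 0).symm y)) :=
    hmp.integrable_comp_of_integrable ((integrable_indicator_iff hS).mpr hF)
  rw [Measure.volume_eq_prod] at hI ⊢
  rw [integral_prod _ hI, ← integral_indicator hU]
  refine integral_congr_ae (ae_of_all _ fun x => ?_)
  simp only [he]
  by_cases hx : x ∈ U
  · rw [Set.indicator_of_mem hx, ← integral_indicator (hT x)]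
    refine integral_congr_ae (ae_of_all _ fun η => ?_)
    by_cases hη : η ∈ T x
    · simp only
      rw [Set.indicator_of_mem hη, Set.indicator_of_mem ((hST x η).mpr ⟨hx, hη⟩)]
    · simp only
      rw [Set.indicator_of_notMem hη, Set.indicator_of_notMem fun h => hη ((hST x η).mp h).2]
  · rw [Set.indicator_of_notMem hx]
    have : ∀ η, S.indicator F (Fin.cons x η) = 0 := fun η =>
      Set.indicator_of_notMem (fun h => hx ((hST x η).mp h).1) F
    simp [this]

/-- The odd part of `exp (i a cos x)` drops out by the reflection `x ↦ π - x`. -/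
lemma integral_exp_cos_mul (a : ℝ) {h : ℝ → ℝ} (hh : Continuous fun x => h (Real.sin x)) :
    ∫ x in (0 : ℝ)..Real.pi,
        Complex.exp (Complex.I * ((a * Real.cos x : ℝ) : ℂ)) * (h (Real.sin x) : ℂ) =
      ((∫ x in (0 : ℝ)..Real.pi, Real.cos (a * Real.cos x) * h (Real.sin x) : ℝ) : ℂ) := by
  have hhc : Continuous fun x => (h (Real.sin x) : ℂ) := Complex.continuous_ofReal.comp hh
  have hrefl := intervalIntegral.integral_comp_sub_left (a := 0) (b := Real.pi) (fun x =>
    Complex.exp (Complex.I * ((a * Real.cos x : ℝ) : ℂ)) * (h (Real.sin x) : ℂ)) Real.pi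
  simp only [Real.cos_pi_sub, Real.sin_pi_sub, sub_self, sub_zero] at hrefl
  have hadd := intervalIntegral.integral_add (μ := volume) (a := 0) (b := Real.pi)
    (f := fun x => Complex.exp (Complex.I * ((a * Real.cos x : ℝ) : ℂ)) * (h (Real.sin x) : ℂ))
    (g := fun x => Complex.exp (Complex.I * ((a * -Real.cos x : ℝ) : ℂ)) * (h (Real.sin x) : ℂ))
    (Continuous.intervalIntegrable (by fun_prop) _ _)
    (Continuous.intervalIntegrable (by fun_prop) _ _)
  rw [hrefl, ← two_mul] at hadd
  rw [← intervalIntegral.integral_ofReal]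
  refine mul_left_cancel₀ (two_ne_zero' ℂ) ?_
  rw [← hadd, ← intervalIntegral.integral_const_mul]
  refine intervalIntegral.integral_congr fun x _ => ?_
  have hcos : ∀ z : ℂ, 2 * Complex.cos z =
      Complex.exp (Complex.I * z) + Complex.exp (Complex.I * -z) := fun z => by
    rw [Complex.cos]
    ring_nf
  simp only [Complex.ofReal_mul, Complex.ofReal_neg, Complex.ofReal_cos]
  rw [mul_neg (a : ℂ), ← add_mul, ← mul_assoc 2, hcos]

lemma prod_Iio_succ {m : ℕ} (f : Fin (m + 1) → ℝ) (j : Fin m) :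
    ∏ i ∈ Finset.Iio j.succ, f i = f 0 * ∏ i ∈ Finset.Iio j, f i.succ := by
  have h : Finset.Iio j.succ = insert 0 ((Finset.Iio j).map (Fin.succEmb m)) := by
    ext i
    refine Fin.cases ?_ (fun i => ?_) i
    · simp
    · simp
  rw [h, Finset.prod_insert (by simp), Finset.prod_map]
  rfl

/-- The characteristic function of one projected step: integrating the angles one at a time with
`integral_cos_mul_besselClifford` gives a Bessel function of the Euclidean norm. -/
lemma integral_angles {m : ℕ} {p : ℝ} (hp : (m : ℝ) ≤ p) (α : Fin m → ℝ) :
    ∫ θ in {θ : Fin m → ℝ | ∀ i, θ i ∈ Set.Icc 0 Real.pi},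
        Complex.exp (Complex.I *
          ((∑ j, α j * (∏ i ∈ Finset.Iio j, Real.sin (θ i)) * Real.cos (θ j) : ℝ) : ℂ)) *
        ((∏ i, Real.sin (θ i) ^ (p - ((i : ℕ) : ℝ)) : ℝ) : ℂ) =
      ((Real.pi ^ ((m : ℝ) / 2) * Real.Gamma (p / 2 + 1 - m / 2) *
        besselClifford (p / 2 + 1) (∑ j, α j ^ 2) : ℝ) : ℂ) := by
  induction m generalizing p with
  | zero =>
    have hG := (Real.Gamma_pos_of_pos (show 0 < p / 2 + 1 by
      have : (0 : ℝ) ≤ p := by simpa using hp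
      linarith)).ne'
    have hset : {θ : Fin 0 → ℝ | ∀ i, θ i ∈ Set.Icc 0 Real.pi} = Set.univ := by
      ext θ; simp
    rw [hset]
    simp only [Measure.restrict_univ, integral_unique, volume_fin_zero_real_univ,
      besselClifford_zero, univ_eq_empty, sum_empty, prod_empty, Nat.cast_zero, zero_div,
      sub_zero, Real.rpow_zero, one_mul, mul_inv_cancel₀ hG]
    simp
  | succ m ih =>
    have hm0 : (0 : ℝ) ≤ m := m.cast_nonneg
    have hp' : (m : ℝ) ≤ p - 1 := by push_cast at hp; linarith
    have hp1 : 1 ≤ p := by linarith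
    have hbox : ∀ m : ℕ, {θ : Fin m → ℝ | ∀ i, θ i ∈ Set.Icc 0 Real.pi} =
        Set.univ.pi fun _ => Set.Icc 0 Real.pi := fun m => by
      ext θ; exact Set.mem_univ_pi.symm
    have hcomp : ∀ m : ℕ, IsCompact {θ : Fin m → ℝ | ∀ i, θ i ∈ Set.Icc 0 Real.pi} := fun m => by
      rw [hbox]; exact isCompact_univ_pi fun _ => isCompact_Icc
    have hexp : ∀ i : Fin (m + 1), 0 ≤ p - ((i : ℕ) : ℝ) := fun i => by
      have : ((i : ℕ) : ℝ) ≤ m := by exact_mod_cast Nat.lt_succ_iff.mp i.2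
      linarith
    have hcont : Continuous fun θ : Fin (m + 1) → ℝ => Complex.exp (Complex.I *
          ((∑ j, α j * (∏ i ∈ Finset.Iio j, Real.sin (θ i)) * Real.cos (θ j) : ℝ) : ℂ)) *
        ((∏ i, Real.sin (θ i) ^ (p - ((i : ℕ) : ℝ)) : ℝ) : ℂ) := by
      refine Continuous.mul (by fun_prop) (Complex.continuous_ofReal.comp ?_)
      exact continuous_finsetProd _ fun i _ =>
        (Real.continuous_rpow_const (hexp i)).comp (by fun_prop)
    rw [setIntegral_fin_succ (U := Set.Icc 0 Real.pi)
      (T := fun _ => {η : Fin m → ℝ | ∀ i, η i ∈ Set.Icc 0 Real.pi})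
      (hcomp _).measurableSet measurableSet_Icc (fun _ => (hcomp _).measurableSet)
      (fun x η => by simp [Fin.forall_fin_succ]) (hcont.continuousOn.integrableOn_compact (hcomp _))]
    set B : ℝ := ∑ j : Fin m, α j.succ ^ 2 with hB
    set C : ℝ := Real.pi ^ ((m : ℝ) / 2) * Real.Gamma ((p - 1) / 2 + 1 - m / 2) with hC
    -- the inner integral is an instance of the induction hypothesis, with `sin x • (α₁, …, αₘ)`
    have hinner : ∀ x : ℝ, ∫ η in {η : Fin m → ℝ | ∀ i, η i ∈ Set.Icc 0 Real.pi},
        Complex.exp (Complex.I *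
          ((∑ j, α j * (∏ i ∈ Finset.Iio j, Real.sin ((Fin.cons x η : Fin (m + 1) → ℝ) i)) *
            Real.cos ((Fin.cons x η : Fin (m + 1) → ℝ) j) : ℝ) : ℂ)) *
        ((∏ i, Real.sin ((Fin.cons x η : Fin (m + 1) → ℝ) i) ^ (p - ((i : ℕ) : ℝ)) : ℝ) : ℂ) =
        (C : ℂ) * (Complex.exp (Complex.I * ((α 0 * Real.cos x : ℝ) : ℂ)) *
          ((Real.sin x ^ p * besselClifford ((p + 1) / 2) (B * Real.sin x ^ 2) : ℝ) : ℂ)) := by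
      intro x
      have h := ih hp' (fun j => Real.sin x * α j.succ)
      have hsq : ∑ j : Fin m, (Real.sin x * α j.succ) ^ 2 = B * Real.sin x ^ 2 := by
        rw [hB, Finset.sum_mul]
        exact Finset.sum_congr rfl fun j _ => by ring
      rw [hsq, show (p - 1) / 2 + 1 = (p + 1) / 2 by ring] at h
      have hpt : ∀ η : Fin m → ℝ, Complex.exp (Complex.I *
          ((∑ j, α j * (∏ i ∈ Finset.Iio j, Real.sin ((Fin.cons x η : Fin (m + 1) → ℝ) i)) *
            Real.cos ((Fin.cons x η : Fin (m + 1) → ℝ) j) : ℝ) : ℂ)) *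
        ((∏ i, Real.sin ((Fin.cons x η : Fin (m + 1) → ℝ) i) ^ (p - ((i : ℕ) : ℝ)) : ℝ) : ℂ) =
          (Complex.exp (Complex.I * ((α 0 * Real.cos x : ℝ) : ℂ)) * ((Real.sin x ^ p : ℝ) : ℂ)) *
          (Complex.exp (Complex.I * ((∑ j : Fin m, Real.sin x * α j.succ *
            (∏ i ∈ Finset.Iio j, Real.sin (η i)) * Real.cos (η j) : ℝ) : ℂ)) *
          ((∏ i : Fin m, Real.sin (η i) ^ (p - 1 - ((i : ℕ) : ℝ)) : ℝ) : ℂ)) := by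
        intro η
        rw [Fin.sum_univ_succ, Fin.prod_univ_succ]
        simp only [prod_Iio_succ, Fin.cons_zero, Fin.cons_succ, Fin.val_zero, Nat.cast_zero,
          sub_zero, Fin.val_succ]
        have h0 : ∏ i ∈ Finset.Iio (0 : Fin (m + 1)),
            Real.sin ((Fin.cons x η : Fin (m + 1) → ℝ) i) = 1 := by
          rw [Finset.Iio_eq_empty.mpr fun _ _ => Fin.zero_le _, Finset.prod_empty]
        have h1 : ∑ j : Fin m, α j.succ * (Real.sin x * ∏ i ∈ Finset.Iio j, Real.sin (η i)) *
            Real.cos (η j) = ∑ j : Fin m, Real.sin x * α j.succ *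
            (∏ i ∈ Finset.Iio j, Real.sin (η i)) * Real.cos (η j) :=
          Finset.sum_congr rfl fun j _ => by ring
        have h2 : ∀ i : Fin m, p - ((i : ℕ) + 1 : ℕ) = p - 1 - ((i : ℕ) : ℝ) := fun i => by
          push_cast; ring
        simp only [h0, h1, h2, mul_one]
        rw [Complex.ofReal_add, mul_add, Complex.exp_add, Complex.ofReal_mul (Real.sin x ^ p)]
        ring
      simp only [hpt]
      rw [integral_const_mul, h, hC, show (p - 1) / 2 + 1 - (m : ℝ) / 2 = (p + 1) / 2 - m / 2 by ring]
      push_cast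
      ring
    simp only [hinner]
    have hcl := continuous_besselClifford (show 1 ≤ (p + 1) / 2 by linarith)
    rw [integral_const_mul, integral_Icc_eq_integral_Ioc,
      ← intervalIntegral.integral_of_le Real.pi_pos.le,
      integral_exp_cos_mul (α 0)
        (h := fun y => y ^ p * besselClifford ((p + 1) / 2) (B * y ^ 2))
        (((Real.continuous_rpow_const (by linarith)).comp Real.continuous_sin).mul
          (hcl.comp (by fun_prop))),
      integral_cos_mul_besselClifford hp1, Fin.sum_univ_succ, ← hB, hC, ← Complex.ofReal_mul]
    congr 1
    rw [show ((m + 1 : ℕ) : ℝ) / 2 = m / 2 + 1 / 2 by push_cast; ring,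
      Real.rpow_add Real.pi_pos, ← Real.sqrt_eq_rpow,
      show (p - 1) / 2 + 1 - (m : ℝ) / 2 = p / 2 + 1 - (m / 2 + 1 / 2) by ring]
    ring

/-! ### Convolution over the simplex of step durations -/

/-- The iterated convolution over the simplex of step durations. -/
lemma integral_simplex_besselKernel {L a : ℝ} (ha : 1 / 2 ≤ a) (n : ℕ) {t : ℝ} (ht : 0 < t) :
    ∫ τ in {τ : Fin n → ℝ | (∀ i, 0 < τ i) ∧ ∑ i, τ i < t},
        (∏ i, besselKernel L a (τ i)) * besselKernel L a (t - ∑ i, τ i) =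
      besselKernel L (((n : ℝ) + 1) * a) t := by
  have hg := continuous_besselKernel L ha
  have hmeas : ∀ (n : ℕ) (t : ℝ),
      MeasurableSet {τ : Fin n → ℝ | (∀ i, 0 < τ i) ∧ ∑ i, τ i < t} := fun n t => by
    have h : {τ : Fin n → ℝ | (∀ i, 0 < τ i) ∧ ∑ i, τ i < t} =
        (⋂ i, {τ : Fin n → ℝ | 0 < τ i}) ∩ {τ : Fin n → ℝ | ∑ i, τ i < t} := by
      ext τ; simp
    rw [h]
    refine IsOpen.measurableSet (IsOpen.inter ?_ ?_)
    · exact isOpen_iInter_of_finite fun i => isOpen_lt continuous_const (continuous_apply i)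
    · exact isOpen_lt (continuous_finsetSum _ fun i _ => continuous_apply i) continuous_const
  induction n generalizing t with
  | zero =>
    have hset : {τ : Fin 0 → ℝ | (∀ i, 0 < τ i) ∧ ∑ i, τ i < t} = Set.univ := by
      ext τ; simp [ht]
    rw [hset]
    simp [integral_unique, volume_fin_zero_real_univ]
  | succ n ih =>
    have hint : IntegrableOn (fun τ : Fin (n + 1) → ℝ =>
        (∏ i, besselKernel L a (τ i)) * besselKernel L a (t - ∑ i, τ i))
        {τ : Fin (n + 1) → ℝ | (∀ i, 0 < τ i) ∧ ∑ i, τ i < t} := by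
      have hc : IsCompact (Set.univ.pi fun _ : Fin (n + 1) => Set.Icc (0 : ℝ) t) :=
        isCompact_univ_pi fun _ => isCompact_Icc
      refine IntegrableOn.mono_set (Continuous.continuousOn ?_ |>.integrableOn_compact hc) ?_
      · fun_prop
      · intro τ hτ i _
        exact ⟨(hτ.1 i).le, (Finset.single_le_sum (fun j _ => (hτ.1 j).le)
          (Finset.mem_univ i)).trans hτ.2.le⟩
    rw [setIntegral_fin_succ (U := Set.Ioo 0 t)
      (T := fun x => {τ : Fin n → ℝ | (∀ i, 0 < τ i) ∧ ∑ i, τ i < t - x})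
      (hmeas _ _) measurableSet_Ioo (fun x => hmeas _ _) ?_ hint]
    · have hinner : ∀ x ∈ Set.Ioo 0 t,
          ∫ η in {τ : Fin n → ℝ | (∀ i, 0 < τ i) ∧ ∑ i, τ i < t - x},
            (∏ i, besselKernel L a ((Fin.cons x η : Fin (n + 1) → ℝ) i)) *
              besselKernel L a (t - ∑ i, (Fin.cons x η : Fin (n + 1) → ℝ) i) =
          besselKernel L a x * besselKernel L (((n : ℝ) + 1) * a) (t - x) := by
        intro x hx
        rw [← ih (sub_pos.mpr hx.2), ← integral_const_mul]
        refine integral_congr_ae (ae_of_all _ fun η => ?_)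
        simp only [Fin.prod_univ_succ, Fin.sum_univ_succ, Fin.cons_zero, Fin.cons_succ]
        rw [mul_assoc, sub_sub]
      rw [setIntegral_congr_fun measurableSet_Ioo hinner, ← integral_Ioc_eq_integral_Ioo,
        ← intervalIntegral.integral_of_le ht.le, integral_besselKernel_mul ha ?_ ht]
      · congr 1; push_cast; ring
      · nlinarith [n.cast_nonneg (α := ℝ)]
    · intro x η
      simp only [Set.mem_ofPred_eq, Fin.forall_fin_succ, Fin.sum_univ_succ, Fin.cons_zero,
        Fin.cons_succ, Set.mem_Ioo]
      constructor
      · rintro ⟨⟨h1, h2⟩, h3⟩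
        have := Finset.sum_nonneg fun i (_ : i ∈ Finset.univ) => (h2 i).le
        exact ⟨⟨h1, by linarith⟩, h2, by linarith⟩
      · rintro ⟨⟨h1, _⟩, h2, h3⟩
        exact ⟨⟨h1, h2⟩, by linarith⟩

theorem stmt2 (d m n : ℕ) (hd : 3 ≤ d) (hm1 : 1 ≤ m) (hm2 : m ≤ d - 2) (hn : 1 ≤ n)
    (ν : ℝ) (hν : 0 ≤ ν) (c t : ℝ) (hc : 0 < c) (ht : 0 < t)
    (α : EuclideanSpace ℝ (Fin m)) (hα : α ≠ 0)
    (A : ℝ → ℂ)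
    (hA : ∀ s : ℝ, A s =
      ∫ θ in {θ : Fin m → ℝ | ∀ i, θ i ∈ Set.Icc 0 Real.pi},
        Complex.exp (Complex.I *
          ((c * s * ∑ j, α j * (∏ i ∈ Finset.Iio j, Real.sin (θ i)) * Real.cos (θ j) : ℝ) : ℂ)) *
        ((Real.Gamma (ν + (d : ℝ) / 2) /
            (Real.pi ^ ((m : ℝ) / 2) * Real.Gamma (ν + ((d : ℝ) - (m : ℝ)) / 2)) *
          ∏ i, Real.sin (θ i) ^ (2 * ν + (d : ℝ) - 2 - ((i : ℕ) : ℝ)) : ℝ) : ℂ)) :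
    (∫ τ in {τ : Fin n → ℝ | (∀ i, 0 < τ i) ∧ ∑ i, τ i < t},
      (let σ : Fin (n + 1) → ℝ := Fin.snoc τ (t - ∑ i, τ i)
       ((Real.Gamma (((n : ℝ) + 1) * (2 * ν + (d : ℝ) - 1)) /
            Real.Gamma (2 * ν + (d : ℝ) - 1) ^ (n + 1) *
          (∏ k, σ k ^ (2 * ν + (d : ℝ) - 2)) /
            t ^ (((n : ℝ) + 1) * (2 * ν + (d : ℝ) - 1) - 1) : ℝ) : ℂ) *
        ∏ k, A (σ k)))
    = (((2 : ℝ) ^ (((n : ℝ) + 1) * (2 * ν + (d : ℝ) - 1) / 2 - 1 / 2) *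
        Real.Gamma (((n : ℝ) + 1) * (2 * ν + (d : ℝ) - 1) / 2 + 1 / 2) *
        besselJ (((n : ℝ) + 1) * (2 * ν + (d : ℝ) - 1) / 2 - 1 / 2) (c * t * ‖α‖) /
          (c * t * ‖α‖) ^ (((n : ℝ) + 1) * (2 * ν + (d : ℝ) - 1) / 2 - 1 / 2) : ℝ) : ℂ) := by
  have hdR : (m : ℝ) + 2 ≤ d := by
    have : m + 2 ≤ d := by omega
    exact_mod_cast this
  have hmR : (0 : ℝ) ≤ m := m.cast_nonneg
  set a : ℝ := (2 * ν + (d : ℝ) - 1) / 2 with ha_def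
  have ha : 1 / 2 ≤ a := by rw [ha_def]; linarith
  have hpa : 2 * ν + (d : ℝ) - 1 = 2 * a := by rw [ha_def]; ring
  have hpa' : 2 * ν + (d : ℝ) - 2 = 2 * a - 1 := by rw [ha_def]; ring
  have hνd : ν + (d : ℝ) / 2 = a + 1 / 2 := by rw [ha_def]; ring
  set L : ℝ := c ^ 2 * ‖α‖ ^ 2 with hL
  have hAs : ∀ s, A s =
      ((Real.Gamma (a + 1 / 2) * besselClifford (a + 1 / 2) (L * s ^ 2) : ℝ) : ℂ) := by
    intro s
    have h := integral_angles (m := m) (p := 2 * a - 1) (by rw [← hpa']; linarith)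
      (fun j => c * s * α j)
    have hsq : ∑ j, (c * s * α j) ^ 2 = L * s ^ 2 := by
      rw [hL, EuclideanSpace.real_norm_sq_eq, Finset.mul_sum, Finset.sum_mul]
      exact Finset.sum_congr rfl fun j _ => by ring
    rw [hsq, show (2 * a - 1) / 2 + 1 = a + 1 / 2 by ring] at h
    have hG := (Real.Gamma_pos_of_pos (show 0 < a + 1 / 2 - (m : ℝ) / 2 by
      rw [← hνd]; linarith)).ne'
    have hpi := (Real.rpow_pos_of_pos Real.pi_pos ((m : ℝ) / 2)).ne'
    have hpt : ∀ θ : Fin m → ℝ, Complex.exp (Complex.I *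
          ((c * s * ∑ j, α j * (∏ i ∈ Finset.Iio j, Real.sin (θ i)) * Real.cos (θ j) : ℝ) : ℂ)) *
        ((Real.Gamma (a + 1 / 2) /
            (Real.pi ^ ((m : ℝ) / 2) * Real.Gamma (a + 1 / 2 - (m : ℝ) / 2)) *
          ∏ i, Real.sin (θ i) ^ (2 * a - 1 - ((i : ℕ) : ℝ)) : ℝ) : ℂ) =
        ((Real.Gamma (a + 1 / 2) /
            (Real.pi ^ ((m : ℝ) / 2) * Real.Gamma (a + 1 / 2 - (m : ℝ) / 2)) : ℝ) : ℂ) *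
        (Complex.exp (Complex.I *
          ((∑ j, c * s * α j * (∏ i ∈ Finset.Iio j, Real.sin (θ i)) * Real.cos (θ j) : ℝ) : ℂ)) *
          ((∏ i, Real.sin (θ i) ^ (2 * a - 1 - ((i : ℕ) : ℝ)) : ℝ) : ℂ)) := by
      intro θ
      have h1 : c * s * ∑ j, α j * (∏ i ∈ Finset.Iio j, Real.sin (θ i)) * Real.cos (θ j) =
          ∑ j, c * s * α j * (∏ i ∈ Finset.Iio j, Real.sin (θ i)) * Real.cos (θ j) := by
        rw [Finset.mul_sum]
        exact Finset.sum_congr rfl fun j _ => by ring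
      rw [h1, Complex.ofReal_mul]
      ring
    rw [hA s, hpa', hνd,
      show ν + ((d : ℝ) - (m : ℝ)) / 2 = a + 1 / 2 - (m : ℝ) / 2 by rw [← hνd]; ring]
    simp only [hpt]
    rw [integral_const_mul, h, ← Complex.ofReal_mul]
    congr 1
    generalize Real.Gamma (a + 1 / 2 - (m : ℝ) / 2) = G at *
    field_simp
  have hN : 0 < ((n : ℝ) + 1) * a := by positivity
  have hGa := (Real.Gamma_pos_of_pos (show 0 < 2 * a by linarith)).ne'
  have hx : 0 < c * t * ‖α‖ := by
    have := norm_pos_iff.mpr hα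
    positivity
  rw [hpa, hpa']
  -- the integrand is a constant multiple of a product of `besselKernel`s
  have hintegrand : ∀ τ : Fin n → ℝ,
      (let σ : Fin (n + 1) → ℝ := Fin.snoc τ (t - ∑ i, τ i)
       ((Real.Gamma (((n : ℝ) + 1) * (2 * a)) / Real.Gamma (2 * a) ^ (n + 1) *
          (∏ k, σ k ^ (2 * a - 1)) / t ^ (((n : ℝ) + 1) * (2 * a) - 1) : ℝ) : ℂ) *
        ∏ k, A (σ k)) =
      ((Real.Gamma (((n : ℝ) + 1) * (2 * a)) / t ^ (((n : ℝ) + 1) * (2 * a) - 1) *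
        ((∏ i, besselKernel L a (τ i)) * besselKernel L a (t - ∑ i, τ i)) : ℝ) : ℂ) := by
    intro τ
    have hsnoc : (∏ i, besselKernel L a (τ i)) * besselKernel L a (t - ∑ i, τ i) =
        ∏ k, besselKernel L a ((Fin.snoc τ (t - ∑ i, τ i) : Fin (n + 1) → ℝ) k) := by
      rw [Fin.prod_univ_castSucc]
      simp
    rw [hsnoc]
    simp only [hAs, besselKernel]
    rw [← Complex.ofReal_prod, ← Complex.ofReal_mul]
    congr 1
    simp only [Finset.prod_mul_distrib, Finset.prod_div_distrib, Finset.prod_const,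
      Finset.card_univ, Fintype.card_fin]
    ring
  simp only [hintegrand]
  rw [integral_complex_ofReal, integral_const_mul, integral_simplex_besselKernel ha n ht]
  congr 1
  rw [besselJ_eq hx, besselKernel,
    show ((n : ℝ) + 1) * (2 * a) / 2 - 1 / 2 = ((n : ℝ) + 1) * a - 1 / 2 by ring,
    show ((n : ℝ) + 1) * (2 * a) / 2 + 1 / 2 = ((n : ℝ) + 1) * a + 1 / 2 by ring,
    show ((n : ℝ) + 1) * (2 * a) = 2 * (((n : ℝ) + 1) * a) by ring,
    show ((n : ℝ) + 1) * a - 1 / 2 + 1 = ((n : ℝ) + 1) * a + 1 / 2 by ring,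
    show (c * t * ‖α‖) ^ 2 = L * t ^ 2 by rw [hL]; ring,
    Real.div_rpow hx.le two_pos.le]
  have g1 := (Real.Gamma_pos_of_pos (show 0 < 2 * (((n : ℝ) + 1) * a) by linarith)).ne'
  have g2 := (Real.rpow_pos_of_pos ht (2 * (((n : ℝ) + 1) * a) - 1)).ne'
  have g3 := (Real.rpow_pos_of_pos hx (((n : ℝ) + 1) * a - 1 / 2)).ne'
  have g4 := (Real.rpow_pos_of_pos two_pos (((n : ℝ) + 1) * a - 1 / 2)).ne'
  generalize Real.Gamma (2 * (((n : ℝ) + 1) * a)) = G1 at *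
  generalize t ^ (2 * (((n : ℝ) + 1) * a) - 1) = T1 at *
  generalize (c * t * ‖α‖) ^ (((n : ℝ) + 1) * a - 1 / 2) = X1 at *
  generalize (2 : ℝ) ^ (((n : ℝ) + 1) * a - 1 / 2) = W1 at *
  field_simp
end

section
/- Let z > 0 and let α, β ∈ ℝ be not both zero, and set R := √(α²+β²). Then ∫₀^{2π} e^{i z (α cosθ + β sinθ)} sin⁴θ dθ = 2π · ( 3 J_2(zR)/(zR)² − 6 β² J_3(zR)/(z R³) + β⁴ J_4(zR)/R⁴ ). -/
/-!
Put `r = z R` and write `(α, β) = R (cos φ, sin φ)`. Since the integrand is `2π`-periodic, the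
rotation `θ = t + φ` turns the phase into `r cos t` and `sin⁴ θ` into
`(sin t cos φ + cos t sin φ)⁴`. The terms odd in `sin t` integrate to zero, and the even ones are
combinations of the Poisson integrals `∫ e^{i r cos t} (sin t)^{2m} dt` with `m = 0, 1, 2`.

Expanding the exponential and integrating termwise (`hasSum_integral_exp_cos`), the Wallis moments
`∫ cos^{2k}` identify these with `2π`, `π`, `3π/2` times the normalized Bessel series
`besselL m (r / 2)` (`poisson_zero`, `poisson_two`, `poisson_four`). The resulting expression
involves the orders `0, 1, 2`; the three-term recurrence `besselL_rec` converts it into the orders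
`2, 3, 4` of the claim.
-/

open MeasureTheory Finset

/-- The normalized Bessel series `∑ (-1)^k x^{2k} / (k! (k+n)!)`, so that
`J_n (2 x) = x ^ n * besselL n x`. -/
noncomputable def besselL (n : ℕ) (x : ℝ) : ℝ :=
  ∑' k : ℕ, (-1 : ℝ) ^ k * x ^ (2 * k) / (k.factorial * (k + n).factorial)

lemma summable_besselL (n : ℕ) (x : ℝ) :
    Summable fun k : ℕ => (-1 : ℝ) ^ k * x ^ (2 * k) / (k.factorial * (k + n).factorial) := by
  refine Summable.of_norm_bounded (Real.summable_pow_div_factorial (x ^ 2)) fun k => ?_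
  have h1 : (1 : ℝ) ≤ (k + n).factorial := by exact_mod_cast Nat.succ_le_of_lt (Nat.factorial_pos _)
  have h2 : (0 : ℝ) < k.factorial := by exact_mod_cast Nat.factorial_pos _
  have h3 : 0 ≤ x ^ (2 * k) := by rw [pow_mul]; positivity
  rw [Real.norm_eq_abs, abs_div, abs_mul, abs_pow, abs_neg, abs_one, one_pow, one_mul,
    abs_of_nonneg h3, abs_of_pos (by positivity), ← pow_mul]
  gcongr
  nlinarith

lemma hasSum_besselL (n : ℕ) (x : ℝ) :
    HasSum (fun k : ℕ => (-1 : ℝ) ^ k * x ^ (2 * k) / (k.factorial * (k + n).factorial))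
      (besselL n x) :=
  (summable_besselL n x).hasSum

lemma besselJ_eq_s8 (n : ℕ) (r : ℝ) :
    besselJ n r = (r / 2) ^ n * besselL n (r / 2) := by
  unfold besselJ besselL
  rw [← tsum_mul_left]
  refine tsum_congr fun k => ?_
  have h1 : Real.Gamma ((k : ℝ) + n + 1) = (k + n).factorial := by
    rw [← Real.Gamma_nat_eq_factorial]; push_cast; rfl
  have h2 : (r / 2) ^ (2 * (k : ℝ) + n) = (r / 2) ^ (2 * k + n) := by
    rw [← Real.rpow_natCast]; push_cast; rfl
  rw [h1, h2, pow_add]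
  ring

/-- The three-term recurrence `J_n + J_{n+2} = (2 (n+1) / r) J_{n+1}` in normalized form. -/
lemma besselL_rec (n : ℕ) (x : ℝ) :
    x ^ 2 * besselL (n + 2) x = (n + 1) * besselL (n + 1) x - besselL n x := by
  have hA := ((hasSum_besselL (n + 1) x).mul_left ((n : ℝ) + 1)).sub (hasSum_besselL n x)
  -- The `k = 0` terms cancel, and the `k + 1` term is `x ^ 2` times the `k`-th term of order `n + 2`.
  have hB := (hasSum_nat_add_iff' 1).mpr hA
  have hC := (hasSum_besselL (n + 2) x).mul_left (x ^ 2)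
  have h0 : ((n : ℝ) + 1) * (1 / ((n + 1).factorial : ℝ)) - 1 / (n.factorial : ℝ) = 0 := by
    have : (n.factorial : ℝ) ≠ 0 := by positivity
    rw [Nat.factorial_succ]; push_cast; field_simp; ring
  have h0' : ∑ i ∈ Finset.range 1,
      (((n : ℝ) + 1) * ((-1 : ℝ) ^ i * x ^ (2 * i) / (i.factorial * (i + (n + 1)).factorial))
        - (-1 : ℝ) ^ i * x ^ (2 * i) / (i.factorial * (i + n).factorial)) = 0 := by
    simpa using h0
  rw [h0', sub_zero] at hB
  refine hC.unique ?_
  refine (congrArg (HasSum · _) (funext fun k => ?_)).mp hB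
  have e1 : k + 1 + (n + 1) = k + n + 1 + 1 := by ring
  have e2 : k + (n + 2) = k + n + 1 + 1 := by ring
  have e3 : k + 1 + n = k + n + 1 := by ring
  rw [e1, e2, e3, Nat.factorial_succ (k + n + 1), Nat.factorial_succ k]
  have h1 : (k.factorial : ℝ) ≠ 0 := by positivity
  have h2 : ((k + n + 1).factorial : ℝ) ≠ 0 := by positivity
  push_cast
  have h3 : (k : ℝ) + n + 1 + 1 ≠ 0 := by positivity
  field_simp
  ring

/-- Termwise integration of the exponential series against a continuous weight. -/
lemma hasSum_integral_exp_cos (r : ℝ) (g : ℝ → ℝ) (hg : Continuous g) :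
    HasSum (fun n : ℕ => (Complex.I * r) ^ n / n.factorial *
        ((∫ t in (0 : ℝ)..(2 * Real.pi), Real.cos t ^ n * g t : ℝ) : ℂ))
      (∫ t in (0 : ℝ)..(2 * Real.pi),
        Complex.exp (Complex.I * ((r * Real.cos t : ℝ) : ℂ)) * ((g t : ℝ) : ℂ)) := by
  have key := intervalIntegral.hasSum_integral_of_dominated_convergence
    (μ := volume) (a := 0) (b := 2 * Real.pi)
    (F := fun (n : ℕ) (t : ℝ) => (Complex.I * r) ^ n / n.factorial *
      ((Real.cos t ^ n * g t : ℝ) : ℂ))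
    (f := fun t => Complex.exp (Complex.I * ((r * Real.cos t : ℝ) : ℂ)) * ((g t : ℝ) : ℂ))
    (fun n t => |r| ^ n / n.factorial * |g t|) ?_ ?_ ?_ ?_ ?_
  · refine (congrArg (HasSum · _) (funext fun n => ?_)).mp key
    rw [intervalIntegral.integral_const_mul, intervalIntegral.integral_ofReal]
  · intro n
    exact Continuous.aestronglyMeasurable (by fun_prop)
  · intro n
    refine Filter.Eventually.of_forall fun t _ => ?_
    rw [norm_mul, norm_div, norm_pow, norm_mul, Complex.norm_I, one_mul, Complex.norm_real,
      Complex.norm_real, Complex.norm_natCast, Real.norm_eq_abs, Real.norm_eq_abs, abs_mul, abs_pow]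
    gcongr
    exact mul_le_of_le_one_left (abs_nonneg _) (pow_le_one₀ (abs_nonneg _) (Real.abs_cos_le_one t))
  · exact Filter.Eventually.of_forall fun t _ =>
      (Real.summable_pow_div_factorial |r|).mul_right _
  · simp_rw [tsum_mul_right]
    exact (continuous_const.mul hg.abs).intervalIntegrable _ _
  · refine Filter.Eventually.of_forall fun t _ => ?_
    have h := (NormedSpace.expSeries_div_hasSum_exp
      (Complex.I * ((r * Real.cos t : ℝ) : ℂ))).mul_right ((g t : ℝ) : ℂ)
    rw [← Complex.exp_eq_exp_ℂ] at h
    refine (congrArg (HasSum · _) (funext fun n => ?_)).mp h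
    push_cast
    rw [← mul_assoc, mul_pow, mul_pow]
    ring

lemma cosMoment_rec (n : ℕ) :
    (∫ t in (0 : ℝ)..(2 * Real.pi), Real.cos t ^ (n + 2)) =
      (n + 1) / (n + 2) * ∫ t in (0 : ℝ)..(2 * Real.pi), Real.cos t ^ n := by
  rw [integral_cos_pow]; simp

lemma cosMoment_odd (k : ℕ) : (∫ t in (0 : ℝ)..(2 * Real.pi), Real.cos t ^ (2 * k + 1)) = 0 := by
  induction k with
  | zero => simp
  | succ k ih =>
    have := cosMoment_rec (2 * k + 1)
    rw [ih, mul_zero] at this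
    exact this

lemma cosMoment_even (k : ℕ) : (∫ t in (0 : ℝ)..(2 * Real.pi), Real.cos t ^ (2 * k)) =
    2 * Real.pi * (2 * k).factorial / (4 ^ k * (k.factorial : ℝ) ^ 2) := by
  induction k with
  | zero => simp
  | succ k ih =>
    have := cosMoment_rec (2 * k)
    rw [ih] at this
    rw [show 2 * (k + 1) = 2 * k + 2 by ring, this, Nat.factorial_succ, Nat.factorial_succ,
      Nat.factorial_succ k]
    have : (k.factorial : ℝ) ≠ 0 := by positivity
    push_cast
    field_simp
    ring

lemma cosMoment_sin_two (n : ℕ) :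
    (∫ t in (0 : ℝ)..(2 * Real.pi), Real.cos t ^ n * Real.sin t ^ 2) =
      1 / (n + 2) * ∫ t in (0 : ℝ)..(2 * Real.pi), Real.cos t ^ n := by
  have h : ∀ t, Real.cos t ^ n * Real.sin t ^ 2 = Real.cos t ^ n - Real.cos t ^ (n + 2) := by
    intro t; rw [Real.sin_sq]; ring
  simp_rw [h]
  rw [intervalIntegral.integral_sub (Continuous.intervalIntegrable (by fun_prop) _ _)
    (Continuous.intervalIntegrable (by fun_prop) _ _), cosMoment_rec]
  field_simp
  ring

lemma cosMoment_sin_four (n : ℕ) :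
    (∫ t in (0 : ℝ)..(2 * Real.pi), Real.cos t ^ n * Real.sin t ^ 4) =
      3 / ((n + 2) * (n + 4)) * ∫ t in (0 : ℝ)..(2 * Real.pi), Real.cos t ^ n := by
  have h : ∀ t, Real.cos t ^ n * Real.sin t ^ 4 =
      Real.cos t ^ n * Real.sin t ^ 2 - Real.cos t ^ (n + 2) * Real.sin t ^ 2 := by
    intro t
    have := Real.sin_sq t
    linear_combination (Real.cos t ^ n * Real.sin t ^ 2) * this
  simp_rw [h]
  rw [intervalIntegral.integral_sub (Continuous.intervalIntegrable (by fun_prop) _ _)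
    (Continuous.intervalIntegrable (by fun_prop) _ _), cosMoment_sin_two, cosMoment_sin_two,
    cosMoment_rec]
  push_cast
  have h4 : (n : ℝ) + 2 + 2 = n + 4 := by ring
  rw [h4]
  field_simp
  ring

/-- If the moments `∫ cos^n g` vanish for odd `n` and produce the coefficients of `C * besselL m`
for even `n`, then `∫ e^{i r cos t} g(t) dt = C * besselL m (r / 2)`. -/
lemma poisson_aux (r C : ℝ) (m : ℕ) (g : ℝ → ℝ) (hg : Continuous g)
    (hodd : ∀ k : ℕ, (∫ t in (0 : ℝ)..(2 * Real.pi), Real.cos t ^ (2 * k + 1) * g t) = 0)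
    (heven : ∀ k : ℕ, (∫ t in (0 : ℝ)..(2 * Real.pi), Real.cos t ^ (2 * k) * g t) =
      C * (2 * k).factorial / (4 ^ k * (k.factorial * (k + m).factorial))) :
    (∫ t in (0 : ℝ)..(2 * Real.pi),
        Complex.exp (Complex.I * ((r * Real.cos t : ℝ) : ℂ)) * ((g t : ℝ) : ℂ)) =
      ((C * besselL m (r / 2) : ℝ) : ℂ) := by
  have h := hasSum_integral_exp_cos r g hg
  have hinj : Function.Injective fun k : ℕ => 2 * k := fun a b hab => by
    simpa using hab
  rw [← hinj.hasSum_iff] at h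
  · refine h.unique ?_
    have h2 := Complex.hasSum_ofReal.mpr ((hasSum_besselL m (r / 2)).mul_left C)
    convert h2 using 2 with k
    simp only [Function.comp]
    rw [heven, pow_mul, mul_pow, Complex.I_sq]
    have h3 : ((2 * k).factorial : ℂ) ≠ 0 := by exact_mod_cast Nat.factorial_ne_zero _
    have h4 : (k.factorial : ℂ) ≠ 0 := by exact_mod_cast Nat.factorial_ne_zero _
    have h5 : ((k + m).factorial : ℂ) ≠ 0 := by exact_mod_cast Nat.factorial_ne_zero _
    push_cast
    rw [pow_mul, div_pow, div_pow, mul_pow]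
    norm_num
    field_simp
  · intro n hn
    obtain ⟨k, hk | hk⟩ := Nat.even_or_odd' n
    · exact absurd ⟨k, hk.symm⟩ hn
    · rw [hk, hodd]; simp

lemma poisson_zero (r : ℝ) :
    (∫ t in (0 : ℝ)..(2 * Real.pi), Complex.exp (Complex.I * ((r * Real.cos t : ℝ) : ℂ)) *
      ((1 : ℝ) : ℂ)) = ((2 * Real.pi * besselL 0 (r / 2) : ℝ) : ℂ) := by
  refine poisson_aux r _ 0 (fun _ => 1) continuous_const (fun k => ?_) (fun k => ?_)
  · simp_rw [mul_one]; exact cosMoment_odd k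
  · simp_rw [mul_one]; rw [cosMoment_even, add_zero, sq]

lemma poisson_two (r : ℝ) :
    (∫ t in (0 : ℝ)..(2 * Real.pi), Complex.exp (Complex.I * ((r * Real.cos t : ℝ) : ℂ)) *
      ((Real.sin t ^ 2 : ℝ) : ℂ)) = ((Real.pi * besselL 1 (r / 2) : ℝ) : ℂ) := by
  refine poisson_aux r _ 1 _ (by fun_prop) (fun k => ?_) (fun k => ?_)
  · rw [cosMoment_sin_two, cosMoment_odd, mul_zero]
  · rw [cosMoment_sin_two, cosMoment_even, Nat.factorial_succ k]
    have : (k.factorial : ℝ) ≠ 0 := by positivity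
    push_cast
    field_simp

lemma poisson_four (r : ℝ) :
    (∫ t in (0 : ℝ)..(2 * Real.pi), Complex.exp (Complex.I * ((r * Real.cos t : ℝ) : ℂ)) *
      ((Real.sin t ^ 4 : ℝ) : ℂ)) = ((3 * Real.pi / 2 * besselL 2 (r / 2) : ℝ) : ℂ) := by
  refine poisson_aux r _ 2 _ (by fun_prop) (fun k => ?_) (fun k => ?_)
  · rw [cosMoment_sin_four, cosMoment_odd, mul_zero]
  · rw [cosMoment_sin_four, cosMoment_even, Nat.factorial_succ (k + 1), Nat.factorial_succ k]
    have : (k.factorial : ℝ) ≠ 0 := by positivity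
    push_cast
    field_simp
    ring

/-- Weights odd under the reflection `t ↦ 2π - t` do not contribute. -/
lemma integral_odd (f : ℝ → ℂ) (hf : ∀ t, f (2 * Real.pi - t) = -f t) :
    (∫ t in (0 : ℝ)..(2 * Real.pi), f t) = 0 := by
  have h := intervalIntegral.integral_comp_sub_left (a := 0) (b := 2 * Real.pi) f (2 * Real.pi)
  simp_rw [hf] at h
  rw [intervalIntegral.integral_neg, sub_self, sub_zero] at h
  exact self_eq_neg.mp h.symm

/-- The integral after rotation, for `c = cos φ` and `s = sin φ`. -/
lemma integral_rotated (r c s : ℝ) (hcs : c ^ 2 + s ^ 2 = 1) :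
    (∫ t in (0 : ℝ)..(2 * Real.pi), Complex.exp (Complex.I * ((r * Real.cos t : ℝ) : ℂ)) *
      (((Real.sin t * c + Real.cos t * s) ^ 4 : ℝ) : ℂ)) =
    ((2 * Real.pi * (3 / 4 * besselL 2 (r / 2) - 6 * s ^ 2 * (r ^ 2 / 8) * besselL 3 (r / 2)
      + s ^ 4 * (r ^ 4 / 16) * besselL 4 (r / 2)) : ℝ) : ℂ) := by
  set E : ℝ → ℂ := fun t => Complex.exp (Complex.I * ((r * Real.cos t : ℝ) : ℂ)) with hE
  have hEc : Continuous E := by rw [hE]; fun_prop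
  have hsplit : ∀ t, E t * (((Real.sin t * c + Real.cos t * s) ^ 4 : ℝ) : ℂ) =
      ((s ^ 4 : ℝ) : ℂ) * (E t * ((1 : ℝ) : ℂ)) +
      ((6 * c ^ 2 * s ^ 2 - 2 * s ^ 4 : ℝ) : ℂ) * (E t * ((Real.sin t ^ 2 : ℝ) : ℂ)) +
      ((c ^ 4 - 6 * c ^ 2 * s ^ 2 + s ^ 4 : ℝ) : ℂ) * (E t * ((Real.sin t ^ 4 : ℝ) : ℂ)) +
      E t * ((4 * c ^ 3 * s * Real.sin t ^ 3 * Real.cos t +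
        4 * c * s ^ 3 * Real.sin t * Real.cos t ^ 3 : ℝ) : ℂ) := by
    intro t
    have h : (Real.sin t * c + Real.cos t * s) ^ 4 = s ^ 4 * 1 +
        (6 * c ^ 2 * s ^ 2 - 2 * s ^ 4) * Real.sin t ^ 2 +
        (c ^ 4 - 6 * c ^ 2 * s ^ 2 + s ^ 4) * Real.sin t ^ 4 +
        (4 * c ^ 3 * s * Real.sin t ^ 3 * Real.cos t +
          4 * c * s ^ 3 * Real.sin t * Real.cos t ^ 3) := by
      have h1 := Real.cos_sq' t
      linear_combination (6 * c ^ 2 * s ^ 2 * Real.sin t ^ 2 +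
        s ^ 4 * (Real.cos t ^ 2 + 1 - Real.sin t ^ 2)) * h1
    rw [h]
    simp only [Complex.ofReal_add, Complex.ofReal_mul]
    ring
  have hodd : (∫ t in (0 : ℝ)..(2 * Real.pi), E t *
      ((4 * c ^ 3 * s * Real.sin t ^ 3 * Real.cos t +
        4 * c * s ^ 3 * Real.sin t * Real.cos t ^ 3 : ℝ) : ℂ)) = 0 := by
    refine integral_odd _ fun t => ?_
    simp only [hE, Real.cos_two_pi_sub, Real.sin_two_pi_sub]
    push_cast
    ring
  rw [intervalIntegral.integral_congr (fun t _ => hsplit t)]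
  rw [intervalIntegral.integral_add (Continuous.intervalIntegrable (by fun_prop) _ _)
      (Continuous.intervalIntegrable (by fun_prop) _ _),
    intervalIntegral.integral_add (Continuous.intervalIntegrable (by fun_prop) _ _)
      (Continuous.intervalIntegrable (by fun_prop) _ _),
    intervalIntegral.integral_add (Continuous.intervalIntegrable (by fun_prop) _ _)
      (Continuous.intervalIntegrable (by fun_prop) _ _), hodd,
    intervalIntegral.integral_const_mul, intervalIntegral.integral_const_mul,
    intervalIntegral.integral_const_mul, poisson_zero, poisson_two, poisson_four]
  have r0 := besselL_rec 0 (r / 2)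
  have r1 := besselL_rec 1 (r / 2)
  have r2 := besselL_rec 2 (r / 2)
  norm_num only [Nat.cast_zero, Nat.cast_one, Nat.cast_ofNat] at r0 r1 r2
  have hc : c ^ 2 = 1 - s ^ 2 := by linarith
  rw [show c ^ 4 = (c ^ 2) ^ 2 by ring, hc, add_zero]
  norm_cast
  generalize besselL 0 (r / 2) = L0 at *
  generalize besselL 1 (r / 2) = L1 at *
  generalize besselL 2 (r / 2) = L2 at *
  generalize besselL 3 (r / 2) = L3 at *
  generalize besselL 4 (r / 2) = L4 at *
  linear_combination (2 * Real.pi * s ^ 4) * r0 +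
    (6 * Real.pi * s ^ 2 - 6 * Real.pi * s ^ 4) * r1 -
    (2 * Real.pi * s ^ 4 * (r / 2) ^ 2) * r2

theorem stmt8 (z α β : ℝ) (hz : 0 < z) (hαβ : ¬(α = 0 ∧ β = 0))
    (R : ℝ) (hR : R = Real.sqrt (α ^ 2 + β ^ 2)) :
    (∫ θ in (0 : ℝ)..(2 * Real.pi),
      Complex.exp (Complex.I * ((z * (α * Real.cos θ + β * Real.sin θ) : ℝ) : ℂ)) *
        ((Real.sin θ ^ 4 : ℝ) : ℂ))
    = ((2 * Real.pi *
        (3 * besselJ 2 (z * R) / (z * R) ^ 2 - 6 * β ^ 2 * besselJ 3 (z * R) / (z * R ^ 3) +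
          β ^ 4 * besselJ 4 (z * R) / R ^ 4) : ℝ) : ℂ) := by
  have hpos : 0 < α ^ 2 + β ^ 2 := by
    rcases eq_or_ne α 0 with h | h
    · have : β ≠ 0 := fun hb => hαβ ⟨h, hb⟩
      positivity
    · positivity
  have hR0 : 0 < R := hR ▸ Real.sqrt_pos.mpr hpos
  obtain ⟨φ, hα, hβ⟩ : ∃ φ : ℝ, α = R * Real.cos φ ∧ β = R * Real.sin φ := by
    have hn : ‖(⟨α, β⟩ : ℂ)‖ = R := by
      rw [hR, Complex.norm_eq_sqrt_sq_add_sq]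
    refine ⟨Complex.arg ⟨α, β⟩, ?_, ?_⟩
    · rw [← hn, Complex.norm_mul_cos_arg]
    · rw [← hn, Complex.norm_mul_sin_arg]
  set f : ℝ → ℂ := fun θ =>
    Complex.exp (Complex.I * ((z * (α * Real.cos θ + β * Real.sin θ) : ℝ) : ℂ)) *
        ((Real.sin θ ^ 4 : ℝ) : ℂ) with hf
  have hper : Function.Periodic f (2 * Real.pi) := fun θ => by
    simp only [hf, Real.cos_add_two_pi, Real.sin_add_two_pi]
  have hshift : (∫ θ in (0 : ℝ)..(2 * Real.pi), f θ) =
      ∫ t in (0 : ℝ)..(2 * Real.pi), f (t + φ) := by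
    rw [intervalIntegral.integral_comp_add_right, zero_add, add_comm (2 * Real.pi) φ]
    simpa using hper.intervalIntegral_add_eq 0 φ
  have hrot : ∀ t, f (t + φ) = Complex.exp (Complex.I * ((z * R * Real.cos t : ℝ) : ℂ)) *
      (((Real.sin t * Real.cos φ + Real.cos t * Real.sin φ) ^ 4 : ℝ) : ℂ) := by
    intro t
    have h : z * (α * Real.cos (t + φ) + β * Real.sin (t + φ)) = z * R * Real.cos t := by
      rw [hα, hβ, Real.cos_add, Real.sin_add]
      linear_combination (z * R * Real.cos t) * Real.sin_sq_add_cos_sq φ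
    simp only [hf]
    rw [h, Real.sin_add]
  rw [hshift]
  simp_rw [hrot]
  rw [integral_rotated _ _ _ (Real.cos_sq_add_sin_sq φ)]
  have j2 := besselJ_eq_s8 2 (z * R)
  have j3 := besselJ_eq_s8 3 (z * R)
  have j4 := besselJ_eq_s8 4 (z * R)
  norm_num at j2 j3 j4
  rw [j2, j3, j4, hβ]
  congr 1
  field_simp
  ring
end
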